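/- Let T be an ideal of n_{d,t} with n_{d,t}^t ⊄ T ⊆ n_{d,t}². Then the set Der_T(n_{d,t}) of derivations mapping T into T is a Lie subalgebra of Der(n_{d,t}), the set Der_{n,T}(n_{d,t}) of derivations mapping all of n_{d,t} into T is an ideal of Der_T(n_{d,t}), and the derivation algebra of the quotient n_{d,t}/T is isomorphic to Der_T(n_{d,t}) / Der_{n,T}(n_{d,t}). -/

import Mathlib

/-!
Let `n` be a Lie algebra and `T` an ideal. A derivation of `n` preserving `T` induces a derivation
of `n ⧸ T`, and this gives a Lie algebra morphism `Der_T(n) → Der(n ⧸ T)` whose kernel is the set of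
derivations mapping `n` into `T`. By the first isomorphism theorem everything reduces to the
surjectivity of this morphism (`exists_equiv_of_forall_lift`).

For `n = n_{d,t}`, surjectivity follows from freeness. Given a derivation `δ` of `n ⧸ T`, choose for
each generator `xᵢ` of the free Lie algebra `L` an element `yᵢ` of `L` whose image in `n ⧸ T` is
`δ xᵢ`. There is a derivation `D` of `L` with `D xᵢ = yᵢ` (`FreeLieAlgebra.exists_derivation`): it is
the second component of the morphism `L → L ⊕ εL` (dual numbers, `ε² = 0`) extending
`xᵢ ↦ xᵢ + ε yᵢ`. Derivations preserve the lower central series, so `D` descends to `n`. The new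
derivation and `δ` are compatible with the projection on generators, hence everywhere; in particular
the former preserves `T`, and it is a lift of `δ`. This argument works for every
ideal `T`.
-/

/-- The free `t`-step nilpotent Lie algebra on `d` generators over `F`. -/
abbrev freeNilpotent (F : Type*) [Field F] (d t : ℕ) :=
  FreeLieAlgebra F (Fin d) ⧸
    LieModule.lowerCentralSeries F (FreeLieAlgebra F (Fin d)) (FreeLieAlgebra F (Fin d)) t

/-- The Lie algebra `L[ε] = L ⊕ εL` over the dual numbers, `ε² = 0`, encoded as pairs `(a, b)`
standing for `a + εb`. This is a type synonym, since `L × L` carries the componentwise bracket. -/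
def DualLie (L : Type*) : Type _ := L × L

namespace DualLie

variable {F L : Type*} [Field F] [LieRing L] [LieAlgebra F L]

instance : AddCommGroup (DualLie L) := inferInstanceAs (AddCommGroup (L × L))

instance : Module F (DualLie L) := inferInstanceAs (Module F (L × L))

@[ext] lemma ext {M : Type*} {x y : DualLie M} (h₁ : x.1 = y.1) (h₂ : x.2 = y.2) : x = y := Prod.ext h₁ h₂

@[simp] lemma fst_add (x y : DualLie L) : (x + y).1 = x.1 + y.1 := rfl

@[simp] lemma snd_add (x y : DualLie L) : (x + y).2 = x.2 + y.2 := rfl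

@[simp] lemma fst_zero : (0 : DualLie L).1 = 0 := rfl

@[simp] lemma snd_zero : (0 : DualLie L).2 = 0 := rfl

@[simp] lemma fst_smul (c : F) (x : DualLie L) : (c • x).1 = c • x.1 := rfl

@[simp] lemma snd_smul (c : F) (x : DualLie L) : (c • x).2 = c • x.2 := rfl

instance : Bracket (DualLie L) (DualLie L) where
  bracket x y := (⁅x.1, y.1⁆, ⁅x.1, y.2⁆ + ⁅x.2, y.1⁆)

@[simp] lemma fst_lie (x y : DualLie L) : ⁅x, y⁆.1 = ⁅x.1, y.1⁆ := rfl

@[simp] lemma snd_lie (x y : DualLie L) : ⁅x, y⁆.2 = ⁅x.1, y.2⁆ + ⁅x.2, y.1⁆ := rfl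

instance : LieRing (DualLie L) where
  add_lie x y z := by
    ext
    · simp
    · simp only [snd_lie, fst_add, snd_add, add_lie]; abel
  lie_add x y z := by
    ext
    · simp
    · simp only [snd_lie, fst_add, snd_add, lie_add]; abel
  lie_self x := by
    ext
    · simp
    · simp only [snd_lie, snd_zero]
      rw [← lie_skew x.2 x.1, add_neg_cancel]
  leibniz_lie x y z := by
    ext
    · simp
    · simp only [snd_lie, fst_lie, snd_add, lie_add, add_lie]
      rw [leibniz_lie x.1 y.1 z.2, leibniz_lie x.1 y.2 z.1, leibniz_lie x.2 y.1 z.1]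
      abel

instance : LieAlgebra F (DualLie L) where
  lie_smul c x y := by
    ext
    · simp
    · simp

end DualLie

namespace FreeLieAlgebra

variable {F X : Type*} [Field F]

/-- The free Lie algebra is generated by `X`: the inclusion of a subalgebra `S` containing `X` has
a section. -/
lemma mem_of_forall_of_mem (S : LieSubalgebra F (FreeLieAlgebra F X))
    (h : ∀ i, of F i ∈ S) (x : FreeLieAlgebra F X) : x ∈ S := by
  have key : S.incl.comp (lift F fun i => (⟨of F i, h i⟩ : S)) = LieHom.id := by
    ext i
    simp
  have hx := LieHom.congr_fun key x
  rw [LieHom.comp_apply, LieHom.id_apply] at hx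
  rw [← hx]
  exact SetLike.coe_mem _

lemma exists_derivation (y : X → FreeLieAlgebra F X) :
    ∃ D : LieDerivation F (FreeLieAlgebra F X) (FreeLieAlgebra F X), ∀ i, D (of F i) = y i := by
  let φ : FreeLieAlgebra F X →ₗ⁅F⁆ DualLie (FreeLieAlgebra F X) :=
    lift F fun i => ((of F i, y i) : FreeLieAlgebra F X × FreeLieAlgebra F X)
  let p : DualLie (FreeLieAlgebra F X) →ₗ⁅F⁆ FreeLieAlgebra F X :=
    { toFun := fun x => x.1
      map_add' := fun _ _ => rfl
      map_smul' := fun _ _ => rfl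
      map_lie' := rfl }
  have hφ : ∀ i, φ (of F i) = ((of F i, y i) : FreeLieAlgebra F X × FreeLieAlgebra F X) :=
    fun i => lift_of_apply _ i
  have hp : p.comp φ = LieHom.id := by
    ext i
    rw [LieHom.comp_apply, hφ]
    rfl
  have h1 : ∀ a, (φ a).1 = a := fun a => LieHom.congr_fun hp a
  refine ⟨{ toFun := fun a => (φ a).2
            map_add' := fun a b => by rw [map_add, DualLie.snd_add]
            map_smul' := fun c a => by rw [map_smul, DualLie.snd_smul, RingHom.id_apply]
            leibniz' := fun a b => ?_ }, fun i => ?_⟩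
  · change (φ ⁅a, b⁆).2 = ⁅a, (φ b).2⁆ - ⁅b, (φ a).2⁆
    rw [LieHom.map_lie, DualLie.snd_lie, h1, h1, ← lie_skew b, sub_neg_eq_add]
  · change (φ (of F i)).2 = y i
    rw [hφ]

end FreeLieAlgebra

namespace LieDerivation

variable {F L : Type*} [Field F] [LieRing L] [LieAlgebra F L]

lemma apply_mem_lowerCentralSeries (D : LieDerivation F L L) (k : ℕ) :
    ∀ x ∈ LieModule.lowerCentralSeries F L L k, D x ∈ LieModule.lowerCentralSeries F L L k := by
  induction k with
  | zero => intro x _; simp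
  | succ k ih =>
    intro x hx
    rw [LieModule.lowerCentralSeries_succ] at hx ⊢
    rw [← LieSubmodule.mem_toSubmodule, LieSubmodule.lieIdeal_oper_eq_linear_span'] at hx
    induction hx using Submodule.span_induction with
    | mem z hz =>
      obtain ⟨a, _, b, hb, rfl⟩ := hz
      rw [D.apply_lie_eq_add]
      exact add_mem (LieSubmodule.lie_mem_lie (LieSubmodule.mem_top _) (ih b hb))
        (LieSubmodule.lie_mem_lie (LieSubmodule.mem_top _) hb)
    | zero => rw [map_zero]; exact zero_mem _
    | add u v _ _ hu hv => rw [map_add]; exact add_mem hu hv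
    | smul c u _ hu => rw [map_smul]; exact SMulMemClass.smul_mem c hu

/-- The derivation of `L ⧸ I` induced by a derivation of `L` preserving the ideal `I`. -/
def quot (I : LieIdeal F L) (D : LieDerivation F L L) (h : ∀ x ∈ I, D x ∈ I) :
    LieDerivation F (L ⧸ I) (L ⧸ I) where
  toLinearMap := Submodule.mapQ I.toSubmodule I.toSubmodule (D : L →ₗ[F] L) h
  leibniz' a b := by
    induction a using Submodule.Quotient.induction_on with | _ a
    induction b using Submodule.Quotient.induction_on with | _ b
    change LieSubmodule.Quotient.mk (N := I) (D ⁅a, b⁆) =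
      LieSubmodule.Quotient.mk (N := I) (⁅a, D b⁆ - ⁅b, D a⁆)
    rw [D.apply_lie_eq_sub]

lemma quot_mk (I : LieIdeal F L) (D : LieDerivation F L L) (h : ∀ x ∈ I, D x ∈ I) (x : L) :
    D.quot I h (LieSubmodule.Quotient.mk x) = LieSubmodule.Quotient.mk (D x) := rfl

/-- The Lie algebra `Der_I(L)` of derivations of `L` mapping the ideal `I` into itself. -/
def stabilizer (I : LieIdeal F L) : LieSubalgebra F (LieDerivation F L L) where
  carrier := {D | ∀ x ∈ I, D x ∈ I}
  add_mem' hD hE x hx := add_mem (hD x hx) (hE x hx)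
  zero_mem' _ _ := zero_mem I
  smul_mem' c _ hD x hx := I.smul_mem c (hD x hx)
  lie_mem' {D E} hD hE x hx := by
    rw [commutator_apply]
    exact sub_mem (hD _ (hE x hx)) (hE _ (hD x hx))

/-- The morphism `Der_I(L) → Der(L ⧸ I)`. -/
def quotHom (I : LieIdeal F L) : stabilizer I →ₗ⁅F⁆ LieDerivation F (L ⧸ I) (L ⧸ I) where
  toFun D := D.1.quot I D.2
  map_add' D E := by
    ext a
    induction a using Submodule.Quotient.induction_on with | _ a
    rfl
  map_smul' c D := by
    ext a
    induction a using Submodule.Quotient.induction_on with | _ a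
    rfl
  map_lie' {D E} := by
    ext a
    induction a using Submodule.Quotient.induction_on with | _ a
    rw [commutator_apply]
    change LieSubmodule.Quotient.mk (N := I) (⁅D.1, E.1⁆ a) =
      LieSubmodule.Quotient.mk (N := I) (D.1 (E.1 a) - E.1 (D.1 a))
    rw [commutator_apply]

lemma mem_ker_quotHom (I : LieIdeal F L) (D : stabilizer I) :
    D ∈ (quotHom I).ker ↔ ∀ x : L, (D : LieDerivation F L L) x ∈ I := by
  rw [LieHom.mem_ker]
  constructor
  · intro h x
    exact (LieSubmodule.Quotient.mk_eq_zero I).1 (congr_fun h (LieSubmodule.Quotient.mk x))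
  · intro h
    ext a
    induction a using Submodule.Quotient.induction_on with | _ a
    exact (LieSubmodule.Quotient.mk_eq_zero I).2 (h a)

/-- A derivation `D` of `L` compatible with a derivation `δ` of `L ⧸ I` automatically preserves `I`,
so if all `δ` admit such a `D`, then `quotHom I` is surjective and induces an isomorphism. -/
lemma exists_equiv_of_forall_lift (I : LieIdeal F L)
    (hlift : ∀ δ : LieDerivation F (L ⧸ I) (L ⧸ I), ∃ D : LieDerivation F L L,
      ∀ x, δ (LieSubmodule.Quotient.mk x) = LieSubmodule.Quotient.mk (D x)) :
    Nonempty (LieDerivation F (L ⧸ I) (L ⧸ I) ≃ₗ⁅F⁆ stabilizer I ⧸ (quotHom I).ker) := by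
  have hsurj : Function.Surjective (quotHom I) := by
    intro δ
    obtain ⟨D, hD⟩ := hlift δ
    have hmem : ∀ x ∈ I, D x ∈ I := by
      intro x hx
      have h0 : (LieSubmodule.Quotient.mk x : L ⧸ I) = 0 := (LieSubmodule.Quotient.mk_eq_zero I).2 hx
      have h1 := hD x
      rw [h0, map_zero] at h1
      exact (LieSubmodule.Quotient.mk_eq_zero I).1 h1.symm
    refine ⟨⟨D, hmem⟩, ?_⟩
    ext a
    induction a using Submodule.Quotient.induction_on with | _ a
    exact (hD a).symm
  have htop : (quotHom I).range = ⊤ := (LieHom.range_eq_top _).2 hsurj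
  exact ⟨((quotHom I).quotKerEquivRange.trans
    ((LieEquiv.ofEq _ _ (by rw [htop])).trans LieSubalgebra.topEquiv)).symm⟩

end LieDerivation

/-- A derivation of the free Lie algebra can be chosen on generators so as to lift `δ`; it descends
to `n_{d,t}` because it preserves the lower central series. -/
lemma freeNilpotent_exists_lift {F : Type*} [Field F] {d t : ℕ}
    (T : LieIdeal F (freeNilpotent F d t))
    (δ : LieDerivation F (freeNilpotent F d t ⧸ T) (freeNilpotent F d t ⧸ T)) :
    ∃ D : LieDerivation F (freeNilpotent F d t) (freeNilpotent F d t),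
      ∀ x, δ (LieSubmodule.Quotient.mk x) = LieSubmodule.Quotient.mk (D x) := by
  let J := LieModule.lowerCentralSeries F (FreeLieAlgebra F (Fin d)) (FreeLieAlgebra F (Fin d)) t
  let q : FreeLieAlgebra F (Fin d) → freeNilpotent F d t ⧸ T := fun x =>
    LieSubmodule.Quotient.mk (LieSubmodule.Quotient.mk x : freeNilpotent F d t)
  have hq : Function.Surjective q :=
    (LieSubmodule.Quotient.surjective_mk' T).comp (LieSubmodule.Quotient.surjective_mk' J)
  have q_lie : ∀ a b, q ⁅a, b⁆ = ⁅q a, q b⁆ := fun _ _ => rfl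
  have q_add : ∀ a b, q (a + b) = q a + q b := fun _ _ => rfl
  have q_smul : ∀ (c : F) a, q (c • a) = c • q a := fun _ _ => rfl
  have q_zero : q 0 = 0 := rfl
  choose y hy using fun i => hq (δ (q (FreeLieAlgebra.of F i)))
  obtain ⟨D, hD⟩ := FreeLieAlgebra.exists_derivation y
  -- The locus where `D` and `δ` are compatible is a subalgebra containing the generators.
  let S : LieSubalgebra F (FreeLieAlgebra F (Fin d)) :=
    { carrier := {x | δ (q x) = q (D x)}
      add_mem' := fun {a b} ha hb => by
        change δ (q (a + b)) = q (D (a + b))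
        rw [q_add, map_add, map_add, q_add]
        exact congr_arg₂ _ ha hb
      zero_mem' := by
        change δ (q 0) = q (D 0)
        rw [map_zero, q_zero, map_zero]
      smul_mem' := fun c a ha => by
        change δ (q (c • a)) = q (D (c • a))
        rw [q_smul, map_smul, map_smul, q_smul]
        exact congr_arg _ ha
      lie_mem' := fun {a b} ha hb => by
        change δ (q ⁅a, b⁆) = q (D ⁅a, b⁆)
        rw [q_lie, δ.apply_lie_eq_add, D.apply_lie_eq_add, q_add, q_lie, q_lie]
        exact congr_arg₂ _ (congr_arg _ hb) (congr_arg (⁅·, q b⁆) ha) }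
  have hS : ∀ x, δ (q x) = q (D x) :=
    FreeLieAlgebra.mem_of_forall_of_mem S fun i => by
      change δ (q (FreeLieAlgebra.of F i)) = q (D (FreeLieAlgebra.of F i))
      rw [hD, hy]
  refine ⟨D.quot J (D.apply_mem_lowerCentralSeries t), fun x => ?_⟩
  obtain ⟨a, rfl⟩ := LieSubmodule.Quotient.surjective_mk' J x
  exact hS a

/-- For an ideal `T` of `n_{d,t}` with `n_{d,t}^t ⊄ T ⊆ n_{d,t}²`, the derivations preserving
`T` form a Lie subalgebra `Der_T`, the derivations mapping `n_{d,t}` into `T` form an ideal of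
`Der_T`, and `Der(n_{d,t}/T)` is isomorphic to the quotient. -/
theorem der_of_quotient (F : Type*) [Field F] [CharZero F] (d t : ℕ)
    (T : LieIdeal F (freeNilpotent F d t))
    (hT1 : T ≤ LieModule.lowerCentralSeries F (freeNilpotent F d t) (freeNilpotent F d t) 1)
    (hT2 : ¬ LieModule.lowerCentralSeries F (freeNilpotent F d t) (freeNilpotent F d t) (t - 1)
      ≤ T) :
    ∃ S : LieSubalgebra F (LieDerivation F (freeNilpotent F d t) (freeNilpotent F d t)),
      (∀ D, D ∈ S ↔ ∀ x ∈ T, D x ∈ T) ∧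
      ∃ I : LieIdeal F S,
        (∀ D : S, D ∈ I ↔
          ∀ x : freeNilpotent F d t,
            (D : LieDerivation F (freeNilpotent F d t) (freeNilpotent F d t)) x ∈ T) ∧
        Nonempty
          ((LieDerivation F (freeNilpotent F d t ⧸ T) (freeNilpotent F d t ⧸ T)) ≃ₗ⁅F⁆ S ⧸ I) := by
  exact ⟨LieDerivation.stabilizer T, fun _ => Iff.rfl, (LieDerivation.quotHom T).ker,
    LieDerivation.mem_ker_quotHom T,
    LieDerivation.exists_equiv_of_forall_lift T (freeNilpotent_exists_lift T)⟩
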